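/- arXiv:2601.02079 — 2 statements merged into one kernel-verified Lean document; each statement's English description precedes it below -/
import Mathlib

section
/- Let V₁, W₁ ∈ (0,1) and Q₁ = V₁(1+W₁)/(2W₁). Then inf_{β∈ℝ} H^max(β) = (1/(1−W₁))·(1−V₁²)/(1−Q₁V₁) if Q₁ ≤ 1, and inf_{β∈ℝ} H^max(β) = (1/(1+W₁))·(1+V₁)/(1−V₁) if Q₁ ≥ 1; this infimum is attained at β if and only if β is an even multiple of π. Moreover sup_{β∈ℝ} H^min(β) = 1/(1−W₁), and this supremum is attained at β if and only if β is an even multiple of π. -/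
/-!
With `m = f^max(x)` and `c = cos x`, the supremum over `α` of `a cos α + b sin α` being
`√(a² + b²)` yields `(m - 1)² = V² + m²W² + 2VmWc` and `1 ≤ m`. This equation is linear in `c`;
solving it for `c` shows that the reciprocal of `H(x, 0) = m / (1 + Vc)` is a quadratic polynomial
in `1/m`, with vertex at `1/m = (1 - W)/(1 - V²)`. The vertex is reached, at `c = -Q`, exactly when
`Q ≤ 1`; otherwise the largest value of `1/m`, taken at `c = -1`, is optimal.

For `β` not a multiple of `2π` there is an `x` at which `cos (x + β)` has the optimal value `c` but
`cos x > c`. Since `f^max(x)` increases strictly with `cos x`, this forces `H^max(β) > H^max(0)`.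
Dually, `α = 0` gives `H(x, 0) ≥ 1/(1 - W) = H(0, 0)`, and `x = -β` gives `H^min(β) < H^min(0)`.
-/

/-- For parameters `V, W ∈ [0,1)`, the function
`f_{VW}(α, x) = (1 + V·cos(x + α))/(1 − W·cos α)`. -/
noncomputable def fVW (V W α x : ℝ) : ℝ :=
    (1 + V * Real.cos (x + α)) / (1 - W * Real.cos α)

/-- `f^max_{VW}(x) = sup_{α ∈ ℝ} f_{VW}(α, x)`. -/
noncomputable def fVWmax (V W x : ℝ) : ℝ := ⨆ α : ℝ, fVW V W α x

/-- `H(x, β) = f^max_{V₁W₁}(x)/(1 + V₁·cos(x + β))`. -/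
noncomputable def Hfun (V₁ W₁ x β : ℝ) : ℝ :=
    fVWmax V₁ W₁ x / (1 + V₁ * Real.cos (x + β))

/-- `H^max(β) = sup_{x ∈ ℝ} H(x, β)`. -/
noncomputable def Hmax (V₁ W₁ β : ℝ) : ℝ := ⨆ x : ℝ, Hfun V₁ W₁ x β

/-- `H^min(β) = inf_{x ∈ ℝ} H(x, β)`. -/
noncomputable def Hmin (V₁ W₁ β : ℝ) : ℝ := ⨅ x : ℝ, Hfun V₁ W₁ x β

open Real Set

lemma isGreatest_range_mul_cos_add_mul_sin (a b : ℝ) :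
    IsGreatest (range fun t => a * cos t + b * sin t) √(a ^ 2 + b ^ 2) := by
  constructor
  · have hcos : √(a ^ 2 + b ^ 2) * cos (Complex.arg ⟨a, b⟩) = a := by
      rw [← Complex.norm_eq_sqrt_sq_add_sq ⟨a, b⟩, Complex.norm_mul_cos_arg]
    have hsin : √(a ^ 2 + b ^ 2) * sin (Complex.arg ⟨a, b⟩) = b := by
      rw [← Complex.norm_eq_sqrt_sq_add_sq ⟨a, b⟩, Complex.norm_mul_sin_arg]
    refine ⟨Complex.arg ⟨a, b⟩, ?_⟩
    linear_combination √(a ^ 2 + b ^ 2) * sin_sq_add_cos_sq (Complex.arg ⟨a, b⟩)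
      - cos (Complex.arg ⟨a, b⟩) * hcos - sin (Complex.arg ⟨a, b⟩) * hsin
  · rintro _ ⟨t, rfl⟩
    apply le_sqrt_of_sq_le
    calc (a * cos t + b * sin t) ^ 2
        ≤ (a * cos t + b * sin t) ^ 2 + (a * sin t - b * cos t) ^ 2 :=
          le_add_of_nonneg_right (sq_nonneg _)
      _ = a ^ 2 + b ^ 2 := by linear_combination (a ^ 2 + b ^ 2) * sin_sq_add_cos_sq t

lemma mul_cos_add_sq_add_neg_mul_sin_sq (a r t : ℝ) :
    (a * cos t + r) ^ 2 + (-(a * sin t)) ^ 2 = a ^ 2 + r ^ 2 + 2 * a * r * cos t := by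
  linear_combination a ^ 2 * sin_sq_add_cos_sq t

lemma abs_mul_cos_le (a t : ℝ) : |a * cos t| ≤ |a| := by
  rw [abs_mul]
  exact mul_le_of_le_one_right (abs_nonneg a) (abs_cos_le_one t)

lemma one_add_mul_cos_pos {a : ℝ} (ha : |a| < 1) (t : ℝ) : 0 < 1 + a * cos t := by
  linarith [neg_le_of_abs_le (abs_mul_cos_le a t)]

lemma one_sub_mul_cos_pos {a : ℝ} (ha : |a| < 1) (t : ℝ) : 0 < 1 - a * cos t := by
  linarith [le_of_abs_le (abs_mul_cos_le a t)]

lemma exists_cos_lt_cos_and_cos_add_eq {x₀ β : ℝ} (hx₀ : cos x₀ < 0) (hβ : cos β ≠ 1) :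
    ∃ x, cos x₀ < cos x ∧ cos (x + β) = cos x₀ := by
  have hβ' : cos β < 1 := lt_of_le_of_ne (cos_le_one β) hβ
  have hsum : 2 * cos x₀ < cos (x₀ - β) + cos (x₀ + β) := by
    rw [cos_add, cos_sub]
    nlinarith
  obtain h | h : cos x₀ < cos (x₀ - β) ∨ cos x₀ < cos (x₀ + β) := by
    by_contra! hle
    linarith
  · exact ⟨x₀ - β, h, by rw [sub_add_cancel]⟩
  · refine ⟨-(x₀ + β), by rwa [cos_neg], ?_⟩
    rw [neg_add, neg_add_cancel_right, cos_neg]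

lemma apply_eq_apply_zero_of_cos_eq_one {γ : Type*} {F : ℝ → γ}
    (hF : Function.Periodic F (2 * π)) {β : ℝ} (hβ : cos β = 1) : F β = F 0 := by
  obtain ⟨k, rfl⟩ := (cos_eq_one_iff β).1 hβ
  exact hF.int_mul_eq k

lemma apply_eq_apply_zero_iff {γ : Type*} {F : ℝ → γ} (hF : Function.Periodic F (2 * π))
    (hne : ∀ β, cos β ≠ 1 → F β ≠ F 0) (β : ℝ) : F β = F 0 ↔ ∃ k : ℤ, β = 2 * k * π := by
  have hcos : F β = F 0 ↔ cos β = 1 :=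
    ⟨not_imp_not.1 (hne β), apply_eq_apply_zero_of_cos_eq_one hF⟩
  rw [hcos, cos_eq_one_iff]
  exact exists_congr fun k => by rw [eq_comm, mul_left_comm, mul_assoc]

section

variable {V W : ℝ}

lemma isGreatest_range_fVW (hW : |W| < 1) (x : ℝ) :
    IsGreatest (range fun α => fVW V W α x) (fVWmax V W x) := by
  have hper : Function.Periodic (fun α => fVW V W α x) (2 * π) := fun α => by
    simp only [fVW, ← add_assoc, cos_add_two_pi]
  have hcont : Continuous fun α => fVW V W α x :=
    Continuous.div (by fun_prop) (by fun_prop) fun α => (one_sub_mul_cos_pos hW α).ne'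
  exact (hper.compact_of_continuous two_pi_pos.ne' hcont).isGreatest_sSup (range_nonempty _)

lemma fVW_le_fVWmax (hW : |W| < 1) (α x : ℝ) : fVW V W α x ≤ fVWmax V W x :=
  (isGreatest_range_fVW hW x).2 ⟨α, rfl⟩

lemma fVWmax_le_iff (hW : |W| < 1) {x m : ℝ} :
    fVWmax V W x ≤ m ↔ √(V ^ 2 + (m * W) ^ 2 + 2 * V * (m * W) * cos x) ≤ m - 1 := by
  rw [isLUB_le_iff (isGreatest_range_fVW hW x).isLUB, ← mul_cos_add_sq_add_neg_mul_sin_sq,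
    isLUB_le_iff (isGreatest_range_mul_cos_add_mul_sin _ _).isLUB, mem_upperBounds,
    mem_upperBounds, forall_mem_range, forall_mem_range]
  refine forall_congr' fun α => ?_
  rw [fVW, div_le_iff₀ (one_sub_mul_cos_pos hW α), cos_add]
  constructor <;> intro h <;> linarith

lemma fVWmax_lt_iff (hW : |W| < 1) {x m : ℝ} :
    fVWmax V W x < m ↔ √(V ^ 2 + (m * W) ^ 2 + 2 * V * (m * W) * cos x) < m - 1 := by
  rw [(isGreatest_range_fVW hW x).lt_iff, ← mul_cos_add_sq_add_neg_mul_sin_sq,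
    (isGreatest_range_mul_cos_add_mul_sin _ _).lt_iff, forall_mem_range, forall_mem_range]
  refine forall_congr' fun α => ?_
  rw [fVW, div_lt_iff₀ (one_sub_mul_cos_pos hW α), cos_add]
  constructor <;> intro h <;> linarith

lemma fVWmax_eq_iff (hW : |W| < 1) {x m : ℝ} :
    fVWmax V W x = m ↔
      1 ≤ m ∧ V ^ 2 + (m * W) ^ 2 + 2 * V * (m * W) * cos x = (m - 1) ^ 2 := by
  have hnonneg : 0 ≤ V ^ 2 + (m * W) ^ 2 + 2 * V * (m * W) * cos x := by
    rw [← mul_cos_add_sq_add_neg_mul_sin_sq]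
    positivity
  rw [eq_iff_le_not_lt, fVWmax_le_iff hW, fVWmax_lt_iff hW, ← eq_iff_le_not_lt]
  constructor
  · intro h
    exact ⟨by linarith [sqrt_nonneg (V ^ 2 + (m * W) ^ 2 + 2 * V * (m * W) * cos x)],
      by rw [← h, sq_sqrt hnonneg]⟩
  · rintro ⟨hm, h⟩
    rw [h, sqrt_sq (sub_nonneg.2 hm)]

lemma one_le_fVWmax (hW : |W| < 1) (x : ℝ) : 1 ≤ fVWmax V W x :=
  ((fVWmax_eq_iff hW).1 rfl).1

lemma fVWmax_pos (hW : |W| < 1) (x : ℝ) : 0 < fVWmax V W x :=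
  zero_lt_one.trans_le (one_le_fVWmax hW x)

lemma fVWmax_lt_fVWmax (hV₀ : 0 < V) (hW₀ : 0 < W) (hW : |W| < 1) {x y : ℝ}
    (hxy : cos x < cos y) : fVWmax V W x < fVWmax V W y := by
  have hy : 0 < fVWmax V W y := fVWmax_pos hW y
  refine (fVWmax_lt_iff hW).2 (lt_of_lt_of_le ?_ ((fVWmax_le_iff hW).1 le_rfl))
  apply sqrt_lt_sqrt
  · rw [← mul_cos_add_sq_add_neg_mul_sin_sq]
    positivity
  · gcongr

lemma fVWmax_le (hW : |W| < 1) (x : ℝ) : fVWmax V W x ≤ (1 + |V|) / (1 - |W|) := by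
  refine ciSup_le fun α => ?_
  have hnum : 1 + V * cos (x + α) ≤ 1 + |V| := by
    linarith [le_of_abs_le (abs_mul_cos_le V (x + α))]
  have hden : 1 - |W| ≤ 1 - W * cos α := by linarith [le_of_abs_le (abs_mul_cos_le W α)]
  exact div_le_div₀ (by positivity) hnum (sub_pos.2 hW) hden

lemma fVWmax_zero (hW : |W| < 1) (hVW : 0 ≤ V + W) : fVWmax V W 0 = (1 + V) / (1 - W) := by
  have hW' : 0 < 1 - W := sub_pos.2 (lt_of_abs_lt hW)
  refine (fVWmax_eq_iff hW).2 ⟨by rw [le_div_iff₀ hW']; linarith, ?_⟩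
  rw [cos_zero]
  field_simp
  ring

lemma fVWmax_pi (hW : |W| < 1) (hWV : W ≤ V) : fVWmax V W π = (1 + V) / (1 + W) := by
  have hW' : 0 < 1 + W := by linarith [neg_lt_of_abs_lt hW]
  refine (fVWmax_eq_iff hW).2 ⟨by rw [le_div_iff₀ hW']; linarith, ?_⟩
  rw [cos_pi]
  field_simp
  ring

lemma Hfun_zero_right (V W x : ℝ) : Hfun V W x 0 = fVWmax V W x / (1 + V * cos x) := by
  rw [Hfun, add_zero]

lemma Hfun_pos (hV : |V| < 1) (hW : |W| < 1) (x β : ℝ) : 0 < Hfun V W x β :=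
  div_pos (fVWmax_pos hW x) (one_add_mul_cos_pos hV _)

lemma bddBelow_range_Hfun (hV : |V| < 1) (hW : |W| < 1) (β : ℝ) :
    BddBelow (range fun x => Hfun V W x β) :=
  ⟨0, forall_mem_range.2 fun x => (Hfun_pos hV hW x β).le⟩

lemma bddAbove_range_Hfun (hV : |V| < 1) (hW : |W| < 1) (β : ℝ) :
    BddAbove (range fun x => Hfun V W x β) := by
  refine ⟨(1 + |V|) / (1 - |W|) / (1 - |V|), forall_mem_range.2 fun x => ?_⟩
  have hden : 1 - |V| ≤ 1 + V * cos (x + β) := by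
    linarith [neg_le_of_abs_le (abs_mul_cos_le V (x + β))]
  exact div_le_div₀ ((fVWmax_pos hW x).le.trans (fVWmax_le hW x)) (fVWmax_le hW x)
    (sub_pos.2 hV) hden

lemma Hfun_periodic (V W x : ℝ) : Function.Periodic (Hfun V W x) (2 * π) := fun β => by
  simp only [Hfun, ← add_assoc, cos_add_two_pi]

lemma Hmax_periodic (V W : ℝ) : Function.Periodic (Hmax V W) (2 * π) := fun β =>
  iSup_congr fun x => Hfun_periodic V W x β

lemma Hmin_periodic (V W : ℝ) : Function.Periodic (Hmin V W) (2 * π) := fun β =>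
  iInf_congr fun x => Hfun_periodic V W x β

lemma Hfun_zero_zero (hV : |V| < 1) (hW : |W| < 1) (hVW : 0 ≤ V + W) :
    Hfun V W 0 0 = 1 / (1 - W) := by
  have hV' : 1 + V ≠ 0 := by linarith [neg_lt_of_abs_lt hV]
  rw [Hfun_zero_right, fVWmax_zero hW hVW, cos_zero, mul_one, div_right_comm, div_self hV']

lemma Hmin_zero (hV : |V| < 1) (hW : |W| < 1) (hVW : 0 ≤ V + W) :
    Hmin V W 0 = 1 / (1 - W) := by
  refine IsLeast.csInf_eq ⟨⟨0, Hfun_zero_zero hV hW hVW⟩, forall_mem_range.2 fun x => ?_⟩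
  have hle : (1 + V * cos x) / (1 - W) ≤ fVWmax V W x := by
    simpa only [fVW, add_zero, cos_zero, mul_one] using fVW_le_fVWmax (V := V) hW 0 x
  rwa [Hfun_zero_right, le_div_iff₀ (one_add_mul_cos_pos hV x), one_div_mul_eq_div]

lemma Hmin_lt_Hmin_zero (hV₀ : 0 < V) (hV : |V| < 1) (hW₀ : 0 < W) (hW : |W| < 1) {β : ℝ}
    (hβ : cos β ≠ 1) : Hmin V W β < Hmin V W 0 := by
  have hcos : cos (-β) < cos 0 := by
    rw [cos_neg, cos_zero]
    exact lt_of_le_of_ne (cos_le_one β) hβ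
  calc Hmin V W β ≤ Hfun V W (-β) β := ciInf_le (bddBelow_range_Hfun hV hW β) (-β)
    _ < Hfun V W 0 0 := by
      rw [Hfun, Hfun, neg_add_cancel, add_zero]
      exact div_lt_div_of_pos_right (fVWmax_lt_fVWmax hV₀ hW₀ hW hcos)
        (one_add_mul_cos_pos hV 0)
    _ = Hmin V W 0 := by
      rw [Hfun_zero_zero hV hW (by positivity), Hmin_zero hV hW (by positivity)]

lemma isGreatest_range_Hmin (hV₀ : 0 < V) (hV : |V| < 1) (hW₀ : 0 < W) (hW : |W| < 1) :
    IsGreatest (range (Hmin V W)) (Hmin V W 0) := by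
  refine ⟨mem_range_self 0, forall_mem_range.2 fun β => ?_⟩
  by_cases hβ : cos β = 1
  · exact (apply_eq_apply_zero_of_cos_eq_one (Hmin_periodic V W) hβ).le
  · exact (Hmin_lt_Hmin_zero hV₀ hV hW₀ hW hβ).le

lemma inv_Hfun_zero (hW₀ : W ≠ 0) (hW : |W| < 1) (x : ℝ) :
    (Hfun V W x 0)⁻¹ = ((1 - W ^ 2) - 2 * (1 - W) * (fVWmax V W x)⁻¹
      + (1 - V ^ 2) * (fVWmax V W x)⁻¹ ^ 2) / (2 * W) := by
  have hm : fVWmax V W x ≠ 0 := (fVWmax_pos hW x).ne'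
  have hquad := ((fVWmax_eq_iff (V := V) (x := x) hW).1 rfl).2
  rw [Hfun_zero_right, inv_div]
  field_simp
  linear_combination hquad

lemma Hfun_zero_le_Hfun_zero_iff (hV : |V| < 1) (hW₀ : 0 < W) (hW : |W| < 1) {x y : ℝ} :
    Hfun V W x 0 ≤ Hfun V W y 0 ↔
      0 ≤ ((fVWmax V W x)⁻¹ - (fVWmax V W y)⁻¹) *
        ((1 - V ^ 2) * ((fVWmax V W x)⁻¹ + (fVWmax V W y)⁻¹) - 2 * (1 - W)) := by
  rw [← inv_le_inv₀ (Hfun_pos hV hW y 0) (Hfun_pos hV hW x 0), inv_Hfun_zero hW₀.ne' hW,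
    inv_Hfun_zero hW₀.ne' hW, div_le_div_iff_of_pos_right (by positivity), ← sub_nonneg]
  ring_nf

/-- The parameter `Q` of the theorem: it decides whether `H(·, 0)` is maximal at an interior
critical value of `cos x` or at `cos x = -1`. -/
noncomputable def thresholdQ (V W : ℝ) : ℝ := V * (1 + W) / (2 * W)

/-- A maximiser of `H(·, 0)`. Since `Real.arccos` is constant below `-1`, it equals `π` as soon
as `1 ≤ thresholdQ V W`. -/
noncomputable def optimalPhase (V W : ℝ) : ℝ := arccos (-thresholdQ V W)

lemma thresholdQ_pos (hV₀ : 0 < V) (hW₀ : 0 < W) : 0 < thresholdQ V W := by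
  unfold thresholdQ
  positivity

lemma cos_optimalPhase_neg (hV₀ : 0 < V) (hW₀ : 0 < W) : cos (optimalPhase V W) < 0 := by
  rw [optimalPhase, arccos_neg, cos_pi_sub, neg_neg_iff_pos]
  have hlt := arccos_lt_pi_div_two.2 (thresholdQ_pos hV₀ hW₀)
  exact cos_pos_of_mem_Ioo ⟨by linarith [arccos_nonneg (thresholdQ V W), pi_pos], hlt⟩

lemma cos_optimalPhase (hV₀ : 0 < V) (hW₀ : 0 < W) (hQ : thresholdQ V W ≤ 1) :
    cos (optimalPhase V W) = -thresholdQ V W :=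
  cos_arccos (neg_le_neg hQ) (by linarith [thresholdQ_pos hV₀ hW₀])

lemma optimalPhase_eq_pi (hQ : 1 ≤ thresholdQ V W) : optimalPhase V W = π :=
  arccos_of_le_neg_one (neg_le_neg hQ)

lemma thresholdQ_le_one_iff (hW₀ : 0 < W) : thresholdQ V W ≤ 1 ↔ V * (1 + W) ≤ 2 * W := by
  rw [thresholdQ, div_le_one (by positivity)]

lemma one_le_thresholdQ_iff (hW₀ : 0 < W) : 1 ≤ thresholdQ V W ↔ 2 * W ≤ V * (1 + W) := by
  rw [thresholdQ, one_le_div (by positivity)]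

lemma sq_le_of_thresholdQ_le_one (hV₀ : 0 < V) (hW₀ : 0 < W) (hQ : thresholdQ V W ≤ 1) :
    V ^ 2 ≤ W := by
  rw [thresholdQ_le_one_iff hW₀] at hQ
  refine le_of_mul_le_mul_right ?_ (show 0 < (1 + W) ^ 2 by positivity)
  calc V ^ 2 * (1 + W) ^ 2 = (V * (1 + W)) ^ 2 := by ring
    _ ≤ (2 * W) ^ 2 := by gcongr
    _ ≤ W * (1 + W) ^ 2 := by nlinarith [mul_nonneg hW₀.le (sq_nonneg (1 - W))]

lemma le_of_one_le_thresholdQ (hW₀ : 0 < W) (hW : |W| < 1) (hQ : 1 ≤ thresholdQ V W) :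
    W ≤ V := by
  rw [one_le_thresholdQ_iff hW₀] at hQ
  nlinarith [lt_of_abs_lt hW]

lemma fVWmax_optimalPhase (hV₀ : 0 < V) (hW₀ : 0 < W) (hW : |W| < 1)
    (hQ : thresholdQ V W ≤ 1) : fVWmax V W (optimalPhase V W) = (1 - V ^ 2) / (1 - W) := by
  have hW' : 0 < 1 - W := sub_pos.2 (lt_of_abs_lt hW)
  refine (fVWmax_eq_iff hW).2 ⟨?_, ?_⟩
  · rw [le_div_iff₀ hW', one_mul]
    linarith [sq_le_of_thresholdQ_le_one hV₀ hW₀ hQ]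
  · rw [cos_optimalPhase hV₀ hW₀ hQ, thresholdQ]
    field_simp
    ring

lemma Hfun_zero_le_optimalPhase_of_le_one (hV₀ : 0 < V) (hV : |V| < 1) (hW₀ : 0 < W)
    (hW : |W| < 1) (hQ : thresholdQ V W ≤ 1) (x : ℝ) :
    Hfun V W x 0 ≤ Hfun V W (optimalPhase V W) 0 := by
  have hV' : 0 < 1 - V ^ 2 := sub_pos.2 ((sq_lt_one_iff_abs_lt_one V).2 hV)
  rw [Hfun_zero_le_Hfun_zero_iff hV hW₀ hW, fVWmax_optimalPhase hV₀ hW₀ hW hQ, inv_div]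
  set u := (fVWmax V W x)⁻¹
  calc 0 ≤ (1 - V ^ 2) * (u - (1 - W) / (1 - V ^ 2)) ^ 2 := by positivity
    _ = _ := by field_simp; ring

lemma Hfun_zero_le_optimalPhase_of_one_le (hV₀ : 0 < V) (hV : |V| < 1) (hW₀ : 0 < W)
    (hW : |W| < 1) (hQ : 1 ≤ thresholdQ V W) (x : ℝ) :
    Hfun V W x 0 ≤ Hfun V W (optimalPhase V W) 0 := by
  have hV' : 0 < 1 - V := sub_pos.2 (lt_of_abs_lt hV)
  rw [optimalPhase_eq_pi hQ, Hfun_zero_le_Hfun_zero_iff hV hW₀ hW,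
    fVWmax_pi hW (le_of_one_le_thresholdQ hW₀ hW hQ), inv_div]
  have hlower : (1 + V) / (1 + W) ≤ fVWmax V W x := by
    refine le_trans ?_ (fVW_le_fVWmax hW (-x) x)
    rw [fVW, add_neg_cancel, cos_zero, mul_one, cos_neg]
    refine div_le_div_of_nonneg_left (by positivity) (one_sub_mul_cos_pos hW x) ?_
    nlinarith [neg_one_le_cos x]
  have hu : (fVWmax V W x)⁻¹ ≤ (1 + W) / (1 + V) := by
    rw [← inv_div]
    exact inv_anti₀ (by positivity) hlower
  refine mul_nonneg_of_nonpos_of_nonpos (sub_nonpos.2 hu) (sub_nonpos.2 ?_)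
  rw [one_le_thresholdQ_iff hW₀] at hQ
  calc (1 - V ^ 2) * ((fVWmax V W x)⁻¹ + (1 + W) / (1 + V))
      ≤ (1 - V ^ 2) * ((1 + W) / (1 + V) + (1 + W) / (1 + V)) := by
        have : 0 ≤ 1 - V ^ 2 := sub_nonneg.2 ((sq_le_one_iff_abs_le_one V).2 hV.le)
        gcongr
    _ = 2 * ((1 - V) * (1 + W)) := by field_simp; ring
    _ ≤ 2 * (1 - W) := by linarith

lemma Hmax_zero_eq_Hfun_optimalPhase (hV₀ : 0 < V) (hV : |V| < 1) (hW₀ : 0 < W)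
    (hW : |W| < 1) : Hmax V W 0 = Hfun V W (optimalPhase V W) 0 := by
  refine IsGreatest.csSup_eq ⟨⟨optimalPhase V W, rfl⟩, forall_mem_range.2 fun x => ?_⟩
  obtain hQ | hQ := le_total (thresholdQ V W) 1
  · exact Hfun_zero_le_optimalPhase_of_le_one hV₀ hV hW₀ hW hQ x
  · exact Hfun_zero_le_optimalPhase_of_one_le hV₀ hV hW₀ hW hQ x

lemma Hmax_zero (hV₀ : 0 < V) (hV : |V| < 1) (hW₀ : 0 < W) (hW : |W| < 1) :
    Hmax V W 0 =
      if thresholdQ V W ≤ 1 then (1 / (1 - W)) * ((1 - V ^ 2) / (1 - thresholdQ V W * V))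
      else (1 / (1 + W)) * ((1 + V) / (1 - V)) := by
  rw [Hmax_zero_eq_Hfun_optimalPhase hV₀ hV hW₀ hW, Hfun_zero_right]
  split_ifs with hQ
  · rw [fVWmax_optimalPhase hV₀ hW₀ hW hQ, cos_optimalPhase hV₀ hW₀ hQ, mul_neg,
      ← sub_eq_add_neg, mul_comm V, div_mul_div_comm, one_mul, div_div]
  · have hQ' : 1 ≤ thresholdQ V W := (not_le.1 hQ).le
    rw [optimalPhase_eq_pi hQ', fVWmax_pi hW (le_of_one_le_thresholdQ hW₀ hW hQ'), cos_pi,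
      mul_neg_one, ← sub_eq_add_neg, div_mul_div_comm, one_mul, div_div]

lemma Hmax_zero_lt_Hmax (hV₀ : 0 < V) (hV : |V| < 1) (hW₀ : 0 < W) (hW : |W| < 1) {β : ℝ}
    (hβ : cos β ≠ 1) : Hmax V W 0 < Hmax V W β := by
  obtain ⟨x, hlt, heq⟩ := exists_cos_lt_cos_and_cos_add_eq (cos_optimalPhase_neg hV₀ hW₀) hβ
  calc Hmax V W 0 = Hfun V W (optimalPhase V W) 0 :=
        Hmax_zero_eq_Hfun_optimalPhase hV₀ hV hW₀ hW
    _ < Hfun V W x β := by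
      rw [Hfun_zero_right, Hfun, heq]
      exact div_lt_div_of_pos_right (fVWmax_lt_fVWmax hV₀ hW₀ hW hlt) (one_add_mul_cos_pos hV _)
    _ ≤ Hmax V W β := le_ciSup (bddAbove_range_Hfun hV hW β) x

lemma isLeast_range_Hmax (hV₀ : 0 < V) (hV : |V| < 1) (hW₀ : 0 < W) (hW : |W| < 1) :
    IsLeast (range (Hmax V W)) (Hmax V W 0) := by
  refine ⟨mem_range_self 0, forall_mem_range.2 fun β => ?_⟩
  by_cases hβ : cos β = 1
  · exact (apply_eq_apply_zero_of_cos_eq_one (Hmax_periodic V W) hβ).ge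
  · exact (Hmax_zero_lt_Hmax hV₀ hV hW₀ hW hβ).le

end

/-- For `V₁, W₁ ∈ (0,1)` and `Q₁ = V₁(1+W₁)/(2W₁)`:
`inf_β H^max(β) = (1/(1−W₁))·(1−V₁²)/(1−Q₁V₁)` if `Q₁ ≤ 1`, and
`= (1/(1+W₁))·(1+V₁)/(1−V₁)` if `Q₁ ≥ 1`, attained at `β` iff `β` is an even
multiple of `π`.  Moreover `sup_β H^min(β) = 1/(1−W₁)`, attained at `β` iff `β`
is an even multiple of `π`. -/
theorem Hmax_inf_Hmin_sup (V₁ W₁ : ℝ)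
    (hV : V₁ ∈ Set.Ioo (0 : ℝ) 1) (hW : W₁ ∈ Set.Ioo (0 : ℝ) 1) :
    let Q₁ : ℝ := V₁ * (1 + W₁) / (2 * W₁)
    (⨅ β : ℝ, Hmax V₁ W₁ β) =
      (if Q₁ ≤ 1 then (1 / (1 - W₁)) * ((1 - V₁ ^ 2) / (1 - Q₁ * V₁))
        else (1 / (1 + W₁)) * ((1 + V₁) / (1 - V₁))) ∧
    (∀ β : ℝ, Hmax V₁ W₁ β =
        (if Q₁ ≤ 1 then (1 / (1 - W₁)) * ((1 - V₁ ^ 2) / (1 - Q₁ * V₁))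
          else (1 / (1 + W₁)) * ((1 + V₁) / (1 - V₁))) ↔
      ∃ k : ℤ, β = 2 * k * Real.pi) ∧
    (⨆ β : ℝ, Hmin V₁ W₁ β) = 1 / (1 - W₁) ∧
    (∀ β : ℝ, Hmin V₁ W₁ β = 1 / (1 - W₁) ↔ ∃ k : ℤ, β = 2 * k * Real.pi) := by
  obtain ⟨hV₀, hV₁⟩ := hV
  obtain ⟨hW₀, hW₁⟩ := hW
  have hV : |V₁| < 1 := by rwa [abs_of_pos hV₀]
  have hW : |W₁| < 1 := by rwa [abs_of_pos hW₀]
  have hmax := Hmax_zero hV₀ hV hW₀ hW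
  have hmin := Hmin_zero hV hW (add_pos hV₀ hW₀).le
  refine ⟨(isLeast_range_Hmax hV₀ hV hW₀ hW).csInf_eq.trans hmax, fun β => ?_,
    (isGreatest_range_Hmin hV₀ hV hW₀ hW).csSup_eq.trans hmin, fun β => ?_⟩
  · exact (Eq.congr_right hmax).symm.trans <| apply_eq_apply_zero_iff (Hmax_periodic V₁ W₁)
      (fun β hβ => (Hmax_zero_lt_Hmax hV₀ hV hW₀ hW hβ).ne') β
  · exact (Eq.congr_right hmin).symm.trans <| apply_eq_apply_zero_iff (Hmin_periodic V₁ W₁)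
      (fun β hβ => (Hmin_lt_Hmin_zero hV₀ hV hW₀ hW hβ).ne) β
end

section
/- Let V₁, W₁ ∈ (0,1), and set L = (V₁² − W₁)/(V₁(1−W₁)), K = W₁(1−V₁²)/(V₁(1−W₁)), and Q₁ = V₁(1+W₁)/(2W₁). Then the pairs (x, α) ∈ ℝ² satisfying both sin x = L·sin α and sin(x+α) = −K·sin α and additionally f_{V₁W₁}(α, x) = f^max_{V₁W₁}(x) (i.e. α is a maximum point of f_{V₁W₁}(·, x)) are exactly: (a) x and α both even multiples of π; (b) when V₁ ≤ W₁: x an odd multiple of π and α an even multiple of π; (c) when V₁ ≥ W₁: x an odd multiple of π and α an odd multiple of π; (d) when Q₁ ≤ 1: the pairs with cos x = −Q₁, cos α = (Q₁ − K)/L and sign(sin x) = −sign(sin α). -/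
/-!
The first two equations of the system say that either `sin x = sin α = 0`, or
`exp (-i x) + L * exp (i α) + K = 0`: a triangle with signed sides `1`, `L`, `K` closes up.
In the triangle case the law of cosines gives `cos x = -Q₁`, and `f` takes the value
`(1 - V₁²) / (1 - W₁)` whatever the angles are.

Writing `M = f(α, x)`, the inequality `f(α + t, x) ≤ M` is linear in `(cos t, sin t)`, so `α` is a
maximum point if and only if it is a critical point and `1 ≤ M`. A closed triangle is always a
critical point, and there `1 ≤ M` amounts to `V₁² ≤ W₁`, that is, `L ≤ 0`; the case `L = 0` is
impossible, since it would force `K = V₁`, `sin x = 0` and `cos x = -V₁` with `V₁² = W₁ ≠ 1`. The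
sign of `L` fixes the relative sign of `sin x` and `sin α`.
-/

open Real Set

section Trigonometry

theorem cos_eq_one_iff_exists_even_mul_pi {x : ℝ} : cos x = 1 ↔ ∃ j : ℤ, x = 2 * j * π := by
  rw [Real.cos_eq_one_iff]
  refine exists_congr fun j ↦ eq_comm.trans ?_
  rw [show j * (2 * π) = 2 * j * π by ring]

theorem cos_eq_neg_one_iff_exists_odd_mul_pi {x : ℝ} :
    cos x = -1 ↔ ∃ j : ℤ, x = (2 * j + 1) * π := by
  rw [Real.cos_eq_neg_one_iff]
  refine exists_congr fun j ↦ eq_comm.trans ?_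
  rw [show π + j * (2 * π) = (2 * j + 1) * π by ring]

theorem forall_mul_cos_add_mul_sin_le_iff {a b : ℝ} :
    (∀ t, a * cos t + b * sin t ≤ a) ↔ 0 ≤ a ∧ b = 0 := by
  constructor
  · intro h
    have at_pi : -a ≤ a := by simpa using h π
    have deriv_at_zero : HasDerivAt (fun t ↦ a * cos t + b * sin t) b 0 := by
      simpa using ((hasDerivAt_cos 0).const_mul a).fun_add ((hasDerivAt_sin 0).const_mul b)
    have max_at_zero : IsLocalMax (fun t ↦ a * cos t + b * sin t) 0 :=
      .of_forall fun t ↦ by simpa using h t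
    exact ⟨by linarith, max_at_zero.hasDerivAt_eq_zero deriv_at_zero⟩
  · rintro ⟨ha, rfl⟩ t
    simpa using mul_le_of_le_one_right ha (cos_le_one t)

theorem one_sub_mul_cos_pos_s9 {W : ℝ} (hW : |W| < 1) (α : ℝ) : 0 < 1 - W * cos α := by
  have : |W * cos α| < 1 := by
    rw [abs_mul]
    exact mul_lt_one_of_nonneg_of_lt_one_left (abs_nonneg W) hW (abs_cos_le_one α)
  linarith [(abs_lt.mp this).2]

theorem real_sign_mul_of_neg {r : ℝ} (hr : r < 0) (s : ℝ) : Real.sign (r * s) = -Real.sign s := by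
  rcases lt_trichotomy s 0 with hs | rfl | hs
  · rw [sign_of_neg hs, sign_of_pos (mul_pos_of_neg_of_neg hr hs), neg_neg]
  · simp
  · rw [sign_of_pos hs, sign_of_neg (mul_neg_of_neg_of_pos hr hs)]

theorem eq_mul_iff_sq_eq_and_sign_eq_neg {r : ℝ} (hr : r < 0) {s t : ℝ} :
    t = r * s ↔ t ^ 2 = (r * s) ^ 2 ∧ Real.sign t = -Real.sign s := by
  refine ⟨fun h ↦ ⟨by rw [h], by rw [h, real_sign_mul_of_neg hr]⟩, fun ⟨h_sq, h_sign⟩ ↦ ?_⟩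
  rcases sq_eq_sq_iff_eq_or_eq_neg.mp h_sq with h | h
  · exact h
  · rw [h, Real.sign_neg, real_sign_mul_of_neg hr, neg_neg] at h_sign
    have hs : s = 0 := Real.sign_eq_zero_iff.mp (by linarith)
    simp [h, hs]

end Trigonometry

section MaximumPoints

variable {V W : ℝ}

theorem continuous_fVW (hW : |W| < 1) (x : ℝ) : Continuous fun α ↦ fVW V W α x := by
  unfold fVW
  exact Continuous.div (by fun_prop) (by fun_prop) fun α ↦ (one_sub_mul_cos_pos_s9 hW α).ne'

theorem periodic_fVW (x : ℝ) : Function.Periodic (fun α ↦ fVW V W α x) (2 * π) := fun α ↦ by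
  simp only [fVW, ← add_assoc, cos_add_two_pi]

theorem fVW_eq_fVWmax_iff_forall_le (hW : |W| < 1) {x α : ℝ} :
    fVW V W α x = fVWmax V W x ↔ ∀ β, fVW V W β x ≤ fVW V W α x := by
  have bdd : BddAbove (range fun β ↦ fVW V W β x) :=
    ((periodic_fVW x).compact_of_continuous two_pi_pos.ne' (continuous_fVW hW x)).bddAbove
  rw [← ciSup_le_iff bdd]
  exact ⟨fun h ↦ h.ge, fun h ↦ (le_ciSup bdd α).antisymm h⟩

theorem fVW_mul_one_sub_mul_cos (hW : |W| < 1) (x α : ℝ) :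
    fVW V W α x * (1 - W * cos α) = 1 + V * cos (x + α) :=
  div_mul_cancel₀ _ (one_sub_mul_cos_pos_s9 hW α).ne'

theorem fVW_add_le_iff (hW : |W| < 1) {x α t : ℝ} :
    fVW V W (α + t) x ≤ fVW V W α x ↔
      (fVW V W α x - 1) * cos t + -(V * sin (x + α) + fVW V W α x * W * sin α) * sin t ≤
        fVW V W α x - 1 := by
  have hM := fVW_mul_one_sub_mul_cos (V := V) hW x α
  generalize fVW V W α x = M at hM ⊢
  have expand : V * cos (x + (α + t)) + M * W * cos (α + t) =
      (M - 1) * cos t + -(V * sin (x + α) + M * W * sin α) * sin t := by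
    rw [← add_assoc, cos_add (x + α) t, cos_add α t]
    linear_combination -cos t * hM
  rw [← expand, fVW, div_le_iff₀ (one_sub_mul_cos_pos_s9 hW _)]
  constructor <;> intro h <;> linarith

theorem fVW_eq_fVWmax_iff (hW : |W| < 1) {x α : ℝ} :
    fVW V W α x = fVWmax V W x ↔
      1 ≤ fVW V W α x ∧ V * sin (x + α) + fVW V W α x * W * sin α = 0 := by
  rw [fVW_eq_fVWmax_iff_forall_le hW, ← (Equiv.addLeft α).forall_congr_right]
  simp only [Equiv.coe_addLeft, fVW_add_le_iff hW, forall_mul_cos_add_mul_sin_le_iff,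
    sub_nonneg, neg_eq_zero]

theorem one_le_fVW_iff (hW : |W| < 1) {x α : ℝ} :
    1 ≤ fVW V W α x ↔ 0 ≤ V * cos (x + α) + W * cos α := by
  rw [fVW, one_le_div (one_sub_mul_cos_pos_s9 hW α)]
  constructor <;> intro h <;> linarith

theorem fVW_eq_fVWmax_iff_of_sin_eq_zero (hW : |W| < 1) {x α : ℝ} (hx : sin x = 0)
    (hα : sin α = 0) : fVW V W α x = fVWmax V W x ↔ 0 ≤ (V * cos x + W) * cos α := by
  rw [fVW_eq_fVWmax_iff hW, one_le_fVW_iff hW, sin_add, cos_add, hx, hα]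
  ring_nf
  simp

theorem sin_eq_zero_and_fVW_eq_fVWmax_iff (hW : |W| < 1) (hVW : 0 < V + W) {x α : ℝ} :
    (sin x = 0 ∧ sin α = 0) ∧ fVW V W α x = fVWmax V W x ↔
      (cos x = 1 ∧ cos α = 1) ∨ (V ≤ W ∧ cos x = -1 ∧ cos α = 1) ∨
        (V ≥ W ∧ cos x = -1 ∧ cos α = -1) := by
  rw [and_congr_right fun h ↦ fVW_eq_fVWmax_iff_of_sin_eq_zero hW h.1 h.2,
    sin_eq_zero_iff_cos_eq, sin_eq_zero_iff_cos_eq]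
  constructor
  · rintro ⟨⟨hx | hx, hα | hα⟩, h⟩ <;> rw [hx, hα] at h
    · exact .inl ⟨hx, hα⟩
    · linarith
    · exact .inr (.inl ⟨by linarith, hx, hα⟩)
    · exact .inr (.inr ⟨by linarith, hx, hα⟩)
  · rintro (⟨hx, hα⟩ | ⟨h, hx, hα⟩ | ⟨h, hx, hα⟩) <;>
      exact ⟨⟨by simp [hx], by simp [hα]⟩, by rw [hx, hα]; linarith⟩

end MaximumPoints

/-- The angles `x` and `α` close a triangle with signed sides `1`, `L`, `K`, that is,
`exp (-i x) + L * exp (i α) + K = 0`; the two fields are its imaginary and real parts. -/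
structure IsClosedTriangle (L K x α : ℝ) : Prop where
  sin_eq : sin x = L * sin α
  cos_add_eq : cos x + L * cos α = -K

section Triangle

variable {L K Q x α : ℝ}

theorem sin_eq_and_sin_add_eq_iff :
    (sin x = L * sin α ∧ sin (x + α) = -K * sin α) ↔
      (sin x = 0 ∧ sin α = 0) ∨ IsClosedTriangle L K x α := by
  have closes_iff (h : sin x = L * sin α) :
      sin (x + α) = -K * sin α ↔ cos x + L * cos α = -K ∨ sin α = 0 := by
    rw [← mul_eq_mul_right_iff, sin_add, h]
    ring_nf
  constructor
  · rintro ⟨h, h_add⟩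
    rcases (closes_iff h).mp h_add with h_cos | hα
    · exact .inr ⟨h, h_cos⟩
    · exact .inl ⟨by rw [h, hα, mul_zero], hα⟩
  · rintro (⟨hx, hα⟩ | ⟨h, h_cos⟩)
    · simp [sin_add, hx, hα]
    · exact ⟨h, (closes_iff h).mpr (.inl h_cos)⟩

theorem IsClosedTriangle.law_of_cosines (h : IsClosedTriangle L K x α) :
    L ^ 2 = 1 + K ^ 2 + 2 * K * cos x := by
  linear_combination -L ^ 2 * sin_sq_add_cos_sq α + sin_sq_add_cos_sq x -
    (sin x + L * sin α) * h.sin_eq + (L * cos α - K - cos x) * h.cos_add_eq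

theorem isClosedTriangle_iff_of_neg (hL : L < 0) (hK : K ≠ 0)
    (hQ : 2 * K * Q = 1 + K ^ 2 - L ^ 2) :
    IsClosedTriangle L K x α ↔
      cos x = -Q ∧ cos α = (Q - K) / L ∧ Real.sign (sin x) = -Real.sign (sin α) := by
  rw [eq_div_iff hL.ne]
  constructor
  · intro h
    have hx : cos x = -Q := mul_left_cancel₀ (mul_ne_zero two_ne_zero hK) <| by
      linear_combination hQ - h.law_of_cosines
    exact ⟨hx, by linarith [h.cos_add_eq], by rw [h.sin_eq, real_sign_mul_of_neg hL]⟩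
  · rintro ⟨hx, hα, h_sign⟩
    have sin_sq_eq : sin x ^ 2 = (L * sin α) ^ 2 := by
      linear_combination sin_sq_add_cos_sq x - L ^ 2 * sin_sq_add_cos_sq α -
        (cos x - Q) * hx - hQ + (cos α * L + Q - K) * hα
    exact ⟨(eq_mul_iff_sq_eq_and_sign_eq_neg hL).mpr ⟨sin_sq_eq, h_sign⟩, by linarith⟩

end Triangle

/-- The coefficient `L` of the system, as a function of the parameters `V` and `W`. -/
noncomputable def ratioL (V W : ℝ) : ℝ := (V ^ 2 - W) / (V * (1 - W))

/-- The coefficient `K` of the system, as a function of the parameters `V` and `W`. -/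
noncomputable def ratioK (V W : ℝ) : ℝ := W * (1 - V ^ 2) / (V * (1 - W))

/-- The number `Q₁`, as a function of the parameters: minus the cosine of the angle `x` in a closed
triangle with sides `1`, `ratioL V W`, `ratioK V W`. -/
noncomputable def ratioQ (V W : ℝ) : ℝ := V * (1 + W) / (2 * W)

section Ratios

variable {V W x α : ℝ}

theorem ratioL_neg_iff (hV : 0 < V) (hW : W < 1) : ratioL V W < 0 ↔ V ^ 2 < W := by
  rw [ratioL, div_lt_iff₀ (mul_pos hV (sub_pos.mpr hW)), zero_mul, sub_neg]

theorem two_mul_ratioK_mul_ratioQ (hV : V ≠ 0) (hW₀ : W ≠ 0) (hW₁ : W ≠ 1) :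
    2 * ratioK V W * ratioQ V W = 1 + ratioK V W ^ 2 - ratioL V W ^ 2 := by
  have : 1 - W ≠ 0 := sub_ne_zero.mpr hW₁.symm
  rw [ratioK, ratioQ, ratioL]
  field_simp
  ring

theorem ratioL_neg_of_ratioQ_le_one (hV : 0 < V) (hW : W ∈ Ioo 0 1) (hQ : ratioQ V W ≤ 1) :
    ratioL V W < 0 := by
  obtain ⟨hW₀, hW₁⟩ := hW
  rw [ratioL_neg_iff hV hW₁]
  rw [ratioQ, div_le_one (by positivity)] at hQ
  refine lt_of_mul_lt_mul_right ?_ (sq_nonneg (1 + W))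
  calc V ^ 2 * (1 + W) ^ 2 = (V * (1 + W)) ^ 2 := by ring
    _ ≤ (2 * W) ^ 2 := by gcongr
    _ < (2 * W) ^ 2 + W * (1 - W) ^ 2 :=
      lt_add_of_pos_right _ (mul_pos hW₀ (pow_pos (sub_pos.mpr hW₁) 2))
    _ = W * (1 + W) ^ 2 := by ring

theorem IsClosedTriangle.fVW_eq (hV : V ≠ 0) (hW : |W| < 1)
    (h : IsClosedTriangle (ratioL V W) (ratioK V W) x α) :
    fVW V W α x = (1 - V ^ 2) / (1 - W) := by
  have hW' : 1 - W ≠ 0 := by linarith [(abs_lt.mp hW).2]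
  have cos_add_eq : cos (x + α) = -ratioK V W * cos α - ratioL V W := by
    rw [cos_add]
    linear_combination -sin α * h.sin_eq + cos α * h.cos_add_eq -
      ratioL V W * sin_sq_add_cos_sq α
  rw [fVW, div_eq_iff (one_sub_mul_cos_pos_s9 hW α).ne', cos_add_eq, ratioK, ratioL]
  field_simp
  ring

theorem IsClosedTriangle.ratioL_ne_zero (hV : V ≠ 0) (hW : W ≠ 1)
    (h : IsClosedTriangle (ratioL V W) (ratioK V W) x α) : ratioL V W ≠ 0 := by
  intro hL
  have hW' : 1 - W ≠ 0 := sub_ne_zero.mpr hW.symm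
  have hVW : W = V ^ 2 := by
    have : V ^ 2 - W = 0 := by simpa [ratioL, hV, hW'] using hL
    linarith
  have hK : ratioK V W = V := by
    rw [ratioK, ← hVW, div_eq_iff (mul_ne_zero hV hW'), hVW]
    ring
  have hx : sin x = 0 := by rw [h.sin_eq, hL, zero_mul]
  have hcos : cos x = -V := by simpa [hL, hK] using h.cos_add_eq
  have hV_sq : V ^ 2 = 1 := by simpa [hx, hcos] using sin_sq_add_cos_sq x
  exact hW (hVW.trans hV_sq)

theorem IsClosedTriangle.fVW_eq_fVWmax_iff_ratioL_neg (hV : 0 < V) (hW : |W| < 1)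
    (h : IsClosedTriangle (ratioL V W) (ratioK V W) x α) :
    fVW V W α x = fVWmax V W x ↔ ratioL V W < 0 := by
  have hW₁ : 0 < 1 - W := sub_pos.mpr (abs_lt.mp hW).2
  have critical : V * sin (x + α) + fVW V W α x * W * sin α = 0 := by
    rw [h.fVW_eq hV.ne' hW, (sin_eq_and_sin_add_eq_iff.mpr (.inr h)).2, ratioK]
    field_simp
    ring
  have one_le_iff : 1 ≤ fVW V W α x ↔ ratioL V W ≤ 0 := by
    rw [h.fVW_eq hV.ne' hW, one_le_div hW₁, ratioL, div_le_iff₀ (mul_pos hV hW₁)]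
    constructor <;> intro _ <;> linarith
  rw [fVW_eq_fVWmax_iff hW, and_iff_left critical, one_le_iff, le_iff_lt_or_eq,
    or_iff_left (h.ratioL_ne_zero hV.ne' (sub_pos.mp hW₁).ne)]

theorem isClosedTriangle_and_fVW_eq_fVWmax_iff (hV : 0 < V) (hW : W ∈ Ioo 0 1) :
    IsClosedTriangle (ratioL V W) (ratioK V W) x α ∧ fVW V W α x = fVWmax V W x ↔
      ratioQ V W ≤ 1 ∧ cos x = -ratioQ V W ∧ cos α = (ratioQ V W - ratioK V W) / ratioL V W ∧
        Real.sign (sin x) = -Real.sign (sin α) := by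
  obtain ⟨hW₀, hW₁⟩ := hW
  have closes_iff (hL : ratioL V W < 0) :
      IsClosedTriangle (ratioL V W) (ratioK V W) x α ↔
        cos x = -ratioQ V W ∧ cos α = (ratioQ V W - ratioK V W) / ratioL V W ∧
          Real.sign (sin x) = -Real.sign (sin α) := by
    have hVW : V ^ 2 < W := (ratioL_neg_iff hV hW₁).mp hL
    have hK : 0 < ratioK V W :=
      div_pos (mul_pos hW₀ (by linarith)) (mul_pos hV (sub_pos.mpr hW₁))
    exact isClosedTriangle_iff_of_neg hL hK.ne'
      (two_mul_ratioK_mul_ratioQ hV.ne' hW₀.ne' hW₁.ne)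
  rw [and_congr_right fun h ↦ h.fVW_eq_fVWmax_iff_ratioL_neg hV (abs_lt.mpr ⟨by linarith, hW₁⟩)]
  constructor
  · rintro ⟨h, hL⟩
    have angles := (closes_iff hL).mp h
    exact ⟨by linarith [angles.1, neg_one_le_cos x], angles⟩
  · rintro ⟨hQ, angles⟩
    have hL := ratioL_neg_of_ratioQ_le_one hV ⟨hW₀, hW₁⟩ hQ
    exact ⟨(closes_iff hL).mpr angles, hL⟩

end Ratios

theorem system_solutions_with_max_general {V W : ℝ} (hV : 0 < V) (hW : W ∈ Ioo 0 1) (x α : ℝ) :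
    (sin x = ratioL V W * sin α ∧ sin (x + α) = -ratioK V W * sin α ∧
      fVW V W α x = fVWmax V W x) ↔
    (((∃ j : ℤ, x = 2 * j * π) ∧ (∃ k : ℤ, α = 2 * k * π)) ∨
      (V ≤ W ∧ (∃ j : ℤ, x = (2 * j + 1) * π) ∧ (∃ k : ℤ, α = 2 * k * π)) ∨
      (V ≥ W ∧ (∃ j : ℤ, x = (2 * j + 1) * π) ∧ (∃ k : ℤ, α = (2 * k + 1) * π)) ∨
      (ratioQ V W ≤ 1 ∧ cos x = -ratioQ V W ∧
        cos α = (ratioQ V W - ratioK V W) / ratioL V W ∧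
        Real.sign (sin x) = -Real.sign (sin α))) := by
  simp only [← cos_eq_one_iff_exists_even_mul_pi, ← cos_eq_neg_one_iff_exists_odd_mul_pi]
  rw [← and_assoc, sin_eq_and_sin_add_eq_iff, or_and_right,
    sin_eq_zero_and_fVW_eq_fVWmax_iff (abs_lt.mpr ⟨by linarith [hW.1], hW.2⟩)
      (add_pos hV hW.1),
    isClosedTriangle_and_fVW_eq_fVWmax_iff hV hW, or_assoc, or_assoc]

/-- Let `V₁, W₁ ∈ (0,1)`, `L = (V₁² − W₁)/(V₁(1−W₁))`,
`K = W₁(1−V₁²)/(V₁(1−W₁))`, `Q₁ = V₁(1+W₁)/(2W₁)`.  The pairs `(x, α)`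
satisfying `sin x = L·sin α`, `sin(x+α) = −K·sin α` and
`f_{V₁W₁}(α, x) = f^max_{V₁W₁}(x)` (i.e. `α` is a maximum point of
`f_{V₁W₁}(·, x)`) are exactly:
(a) `x, α` both even multiples of `π`;
(b) for `V₁ ≤ W₁`: `x` an odd multiple of `π`, `α` an even multiple of `π`;
(c) for `V₁ ≥ W₁`: `x` an odd multiple of `π`, `α` an odd multiple of `π`;
(d) for `Q₁ ≤ 1`: `cos x = −Q₁`, `cos α = (Q₁ − K)/L`,
`sign(sin x) = −sign(sin α)`. -/
theorem system_solutions_with_max (V₁ W₁ : ℝ)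
    (hV : V₁ ∈ Set.Ioo (0 : ℝ) 1) (hW : W₁ ∈ Set.Ioo (0 : ℝ) 1) :
    let L : ℝ := (V₁ ^ 2 - W₁) / (V₁ * (1 - W₁))
    let K : ℝ := W₁ * (1 - V₁ ^ 2) / (V₁ * (1 - W₁))
    let Q₁ : ℝ := V₁ * (1 + W₁) / (2 * W₁)
    ∀ x α : ℝ,
      (Real.sin x = L * Real.sin α ∧ Real.sin (x + α) = -K * Real.sin α ∧
        fVW V₁ W₁ α x = fVWmax V₁ W₁ x) ↔
      (((∃ j : ℤ, x = 2 * j * Real.pi) ∧ (∃ k : ℤ, α = 2 * k * Real.pi)) ∨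
        (V₁ ≤ W₁ ∧ (∃ j : ℤ, x = (2 * j + 1) * Real.pi) ∧
          (∃ k : ℤ, α = 2 * k * Real.pi)) ∨
        (V₁ ≥ W₁ ∧ (∃ j : ℤ, x = (2 * j + 1) * Real.pi) ∧
          (∃ k : ℤ, α = (2 * k + 1) * Real.pi)) ∨
        (Q₁ ≤ 1 ∧ Real.cos x = -Q₁ ∧ Real.cos α = (Q₁ - K) / L ∧
          Real.sign (Real.sin x) = -Real.sign (Real.sin α))) :=
  system_solutions_with_max_general hV.1 hW
end
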